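/- arXiv:1408.4430 — 15 statements merged into one kernel-verified Lean document; each statement's English description precedes it below -/
import Mathlib

section
/- Let λ1, λ2, λ3, μ1, μ2, μ3 be positive real numbers such that λ1+λ2+λ3 ≤ μ1+μ2+μ3, λ1λ2+λ1λ3+λ2λ3 ≤ μ1μ2+μ1μ3+μ2μ3, and λ1λ2λ3 = μ1μ2μ3. Then (log λ1)² + (log λ2)² + (log λ3)² ≤ (log μ1)² + (log μ2)² + (log μ3)². -/
open Filter Topology in
/-- `slogT` is an antiderivative of `log (1 + exp (-y))` with a limit at infinity. -/
theorem slog_exists : ∃ (T : ℝ → ℝ) (L : ℝ),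
    (∀ y, HasDerivAt T (Real.log (1 + Real.exp (-y))) y) ∧ Tendsto T atTop (𝓝 L) ∧
    (∀ y, y ^ 2 / 2 + T y + T (-y) = 0) := by
  have hpos : ∀ y : ℝ, 0 < 1 + Real.exp (-y) := fun y => by positivity
  have hc : Continuous (fun y : ℝ => Real.log (1 + Real.exp (-y))) :=
    Continuous.log (by fun_prop) (fun y => (hpos y).ne')
  set T : ℝ → ℝ := fun y => ∫ s in (0:ℝ)..y, Real.log (1 + Real.exp (-s)) with hT
  have hd : ∀ y, HasDerivAt T (Real.log (1 + Real.exp (-y))) y := fun y =>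
    hc.integral_hasStrictDerivAt 0 y |>.hasDerivAt
  have hT0 : T 0 = 0 := by simp [hT]
  have hmono : Monotone T := by
    apply monotone_of_hasDerivAt_nonneg hd
    intro y
    exact Real.log_nonneg (by have := Real.exp_pos (-y); linarith)
  have hanti : Antitone (fun y => T y + Real.exp (-y)) := by
    apply antitone_of_hasDerivAt_nonpos
      (f' := fun y => Real.log (1 + Real.exp (-y)) + Real.exp (-y) * (-1))
    · intro y
      exact (hd y).add ((hasDerivAt_neg y).exp)
    · intro y
      have := Real.log_le_sub_one_of_pos (hpos y)
      show Real.log (1 + Real.exp (-y)) + Real.exp (-y) * (-1) ≤ 0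
      linarith
  have hbdd : BddAbove (Set.range T) := by
    refine ⟨1, ?_⟩
    rintro _ ⟨y, rfl⟩
    rcases le_total 0 y with h | h
    · have h' := hanti h
      simp only [hT0, neg_zero, Real.exp_zero] at h'
      have := Real.exp_pos (-y)
      linarith
    · have := hmono h
      linarith
  refine ⟨T, _, hd, tendsto_atTop_ciSup hmono hbdd, ?_⟩
  have hder : ∀ y, HasDerivAt (fun y => y ^ 2 / 2 + T y + T (-y)) 0 y := by
    intro y
    have e1 := (((hasDerivAt_id y).pow 2).div_const 2).add (hd y)
    have e2 := (hd (-y)).comp y (hasDerivAt_neg y)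
    refine (e1.add e2).congr_deriv ?_
    have : Real.log (1 + Real.exp y) = y + Real.log (1 + Real.exp (-y)) := by
      rw [← Real.log_exp y, ← Real.log_mul (Real.exp_pos _).ne' (by rw [Real.log_exp]; exact (hpos y).ne'),
        Real.log_exp, mul_add, ← Real.exp_add]
      simp [add_comm]
    simp only [id, neg_neg, this, Nat.cast_ofNat]
    ring
  intro y
  have := is_const_of_deriv_eq_zero (fun y => (hder y).differentiableAt)
    (fun y => (hder y).deriv) y 0
  simpa [hT0] using this

open Filter Topology in
theorem sum_of_squared_logarithms_inequality_3D
    (l1 l2 l3 m1 m2 m3 : ℝ)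
    (hl1 : 0 < l1) (hl2 : 0 < l2) (hl3 : 0 < l3)
    (hm1 : 0 < m1) (hm2 : 0 < m2) (hm3 : 0 < m3)
    (h1 : l1 + l2 + l3 ≤ m1 + m2 + m3)
    (h2 : l1 * l2 + l1 * l3 + l2 * l3 ≤ m1 * m2 + m1 * m3 + m2 * m3)
    (h3 : l1 * l2 * l3 = m1 * m2 * m3) :
    (Real.log l1) ^ 2 + (Real.log l2) ^ 2 + (Real.log l3) ^ 2 ≤
      (Real.log m1) ^ 2 + (Real.log m2) ^ 2 + (Real.log m3) ^ 2 := by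
  obtain ⟨T, L, hd, hL, hT⟩ := slog_exists
  set E : ℝ → ℝ → ℝ := fun m R => m ^ 2 / 2 + T (R + m) + T (R - m) with hE
  have hE0 : ∀ m, E m 0 = 0 := fun m => by simpa [hE] using hT m
  have hEd : ∀ m, 0 < m → ∀ R, HasDerivAt (E (Real.log m))
      (Real.log (1 + Real.exp (-R) / m) + Real.log (1 + Real.exp (-R) * m)) R := by
    intro m hm R
    have a1 := (hd (R + Real.log m)).comp_add_const R (Real.log m)
    have a2 := (hd (R - Real.log m)).comp_sub_const R (Real.log m)
    have a3 := (a1.const_add (Real.log m ^ 2 / 2)).add a2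
    have b1 : Real.exp (-(R + Real.log m)) = Real.exp (-R) / m := by
      rw [neg_add, ← sub_eq_add_neg, Real.exp_sub, Real.exp_log hm]
    have b2 : Real.exp (-(R - Real.log m)) = Real.exp (-R) * m := by
      rw [neg_sub, sub_eq_add_neg, add_comm, Real.exp_add, Real.exp_log hm]
    rw [b1, b2] at a3
    exact a3
  have hEl : ∀ m, Tendsto (E m) atTop (𝓝 (m ^ 2 / 2 + L + L)) := by
    intro m
    have a1 := hL.comp (tendsto_atTop_add_const_right atTop m tendsto_id)
    have a2 := hL.comp (tendsto_atTop_add_const_right atTop (-m) tendsto_id)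
    exact (a1.const_add (m ^ 2 / 2)).add a2
  set K : ℝ → ℝ := fun R => (E (Real.log m1) R + E (Real.log m2) R + E (Real.log m3) R) -
    (E (Real.log l1) R + E (Real.log l2) R + E (Real.log l3) R) with hK
  have hKd : ∀ R, HasDerivAt K _ R := fun R =>
    (((hEd m1 hm1 R).add (hEd m2 hm2 R)).add (hEd m3 hm3 R)).sub
      (((hEd l1 hl1 R).add (hEd l2 hl2 R)).add (hEd l3 hl3 R))
  have hKmono : Monotone K := by
    apply monotone_of_hasDerivAt_nonneg hKd
    intro R
    show (0:ℝ) ≤ _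
    have hx : 0 < Real.exp (-R) := Real.exp_pos _
    beta_reduce
    generalize Real.exp (-R) = x at hx
    have key1 : Real.log (1 + x * l1) + Real.log (1 + x * l2) + Real.log (1 + x * l3) ≤
        Real.log (1 + x * m1) + Real.log (1 + x * m2) + Real.log (1 + x * m3) := by
      rw [← Real.log_mul (by positivity) (by positivity), ← Real.log_mul (by positivity) (by positivity),
        ← Real.log_mul (by positivity) (by positivity), ← Real.log_mul (by positivity) (by positivity)]
      apply Real.log_le_log (by positivity)
      have c1 := mul_le_mul_of_nonneg_left h1 hx.le
      have c2 := mul_le_mul_of_nonneg_left h2 (sq_nonneg x)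
      linear_combination c1 + c2 + x ^ 3 * h3
    have key2 : Real.log (1 + x / l1) + Real.log (1 + x / l2) + Real.log (1 + x / l3) ≤
        Real.log (1 + x / m1) + Real.log (1 + x / m2) + Real.log (1 + x / m3) := by
      rw [← Real.log_mul (by positivity) (by positivity), ← Real.log_mul (by positivity) (by positivity),
        ← Real.log_mul (by positivity) (by positivity), ← Real.log_mul (by positivity) (by positivity)]
      apply Real.log_le_log (by positivity)
      have f : ∀ a b c : ℝ, 0 < a → 0 < b → 0 < c → (1 + x / a) * (1 + x / b) * (1 + x / c) =
          (a * b * c + x * (a * b + a * c + b * c) + x ^ 2 * (a + b + c) + x ^ 3) / (a * b * c) := by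
        intro a b c ha hb hc
        field_simp
        ring
      rw [f _ _ _ hl1 hl2 hl3, f _ _ _ hm1 hm2 hm3, h3]
      gcongr
    linarith
  have hKl : Tendsto K atTop (𝓝 _) :=
    (((hEl (Real.log m1)).add (hEl (Real.log m2))).add (hEl (Real.log m3))).sub
      (((hEl (Real.log l1)).add (hEl (Real.log l2))).add (hEl (Real.log l3)))
  have hK0 : K 0 = 0 := by simp [hK, hE0]
  have := hKmono.ge_of_tendsto hKl 0
  rw [hK0] at this
  linarith
end

section
/- Let λ1, λ2, μ1, μ2 be positive real numbers such that λ1+λ2 ≤ μ1+μ2 and λ1λ2 = μ1μ2. Then (log λ1)² + (log λ2)² ≤ (log μ1)² + (log μ2)². -/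
theorem sum_of_squared_logarithms_inequality_2D
    (l1 l2 m1 m2 : ℝ)
    (hl1 : 0 < l1) (hl2 : 0 < l2) (hm1 : 0 < m1) (hm2 : 0 < m2)
    (h1 : l1 + l2 ≤ m1 + m2)
    (h2 : l1 * l2 = m1 * m2) :
    (Real.log l1) ^ 2 + (Real.log l2) ^ 2 ≤ (Real.log m1) ^ 2 + (Real.log m2) ^ 2 := by
  have hs : Real.log l1 + Real.log l2 = Real.log m1 + Real.log m2 := by
    rw [← Real.log_mul hl1.ne' hl2.ne', h2, Real.log_mul hm1.ne' hm2.ne']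
  have hp : (l1 - m1) * (l1 - m2) ≤ 0 := by
    have h3 : (l1 - m1) * (l1 - m2) = l1 * (l1 + l2 - (m1 + m2)) := by
      linear_combination -h2
    rw [h3]
    exact mul_nonpos_of_nonneg_of_nonpos hl1.le (by linarith)
  have hq : (Real.log l1 - Real.log m1) * (Real.log l1 - Real.log m2) ≤ 0 := by
    rcases mul_nonpos_iff.mp hp with ⟨ha, hb⟩ | ⟨ha, hb⟩
    · have := Real.log_le_log hm1 (sub_nonneg.mp ha)
      have := Real.log_le_log hl1 (sub_nonpos.mp hb)
      exact mul_nonpos_of_nonneg_of_nonpos (by linarith) (by linarith)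
    · have := Real.log_le_log hl1 (sub_nonpos.mp ha)
      have := Real.log_le_log hm2 (sub_nonneg.mp hb)
      exact mul_nonpos_of_nonpos_of_nonneg (by linarith) (by linarith)
  have hb : Real.log l2 = Real.log m1 + Real.log m2 - Real.log l1 := by linarith
  rw [hb]
  nlinarith [hq]
end

section
/- For every real k > 0, the function g : (0,∞)² → ℝ defined by g(λ1,λ2) = exp((k/2)·(log(λ1/λ2))²) is not convex on the open positive quadrant (0,∞)². -/
theorem isochoric_exp_hencky_not_convex (k : ℝ) (hk : 0 < k) :
    ¬ ConvexOn ℝ {p : ℝ × ℝ | 0 < p.1 ∧ 0 < p.2}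
      (fun p : ℝ × ℝ => Real.exp ((k / 2) * (Real.log (p.1 / p.2)) ^ 2)) := by
  intro h
  -- the function is homogeneous of degree 0, so convexity forces g(a + b) ≤ g(a)
  have key : ∀ t : ℝ, 0 < t → t < 1 →
      Real.exp ((k / 2) * (Real.log 2) ^ 2) ≤
        (1 - t) + t * Real.exp ((k / 2) * (Real.log 3) ^ 2) := by
    intro t ht ht1
    have hs : 0 < 1 - t := by linarith
    have h2 := h.2 (x := ((1 / 2) / (1 - t), (1 / 2) / (1 - t)))
      (show _ ∧ _ from ⟨by positivity, by positivity⟩)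
      (y := ((3 / 2) / t, (1 / 2) / t))
      (show _ ∧ _ from ⟨by positivity, by positivity⟩)
      hs.le ht.le (by ring)
    simp only [Prod.fst_add, Prod.snd_add, Prod.smul_fst, Prod.smul_snd, smul_eq_mul] at h2
    have e1 : ((1 - t) * (1 / 2 / (1 - t)) + t * (3 / 2 / t)) /
        ((1 - t) * (1 / 2 / (1 - t)) + t * (1 / 2 / t)) = 2 := by
      rw [mul_div_cancel₀ _ hs.ne', mul_div_cancel₀ _ ht.ne', mul_div_cancel₀ _ ht.ne']
      norm_num
    have e2 : (1 / 2 / (1 - t)) / (1 / 2 / (1 - t)) = 1 := div_self (by positivity)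
    have e3 : (3 / 2 / t) / (1 / 2 / t) = 3 := by
      field_simp
    rw [e1, e2, e3] at h2
    simpa using h2
  have hl : 0 < Real.log 2 := Real.log_pos (by norm_num)
  have hc : 1 < Real.exp ((k / 2) * (Real.log 2) ^ 2) := by
    rw [Real.one_lt_exp_iff]; positivity
  have hD : 0 < Real.exp ((k / 2) * (Real.log 3) ^ 2) := Real.exp_pos _
  generalize Real.exp ((k / 2) * (Real.log 2) ^ 2) = c at *
  generalize Real.exp ((k / 2) * (Real.log 3) ^ 2) = D at *
  have hp : 0 < 2 * (D + c) := by linarith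
  have ht : 0 < (c - 1) / (2 * (D + c)) := div_pos (by linarith) hp
  have ht1 : (c - 1) / (2 * (D + c)) < 1 := by rw [div_lt_one hp]; linarith
  have := key _ ht ht1
  have e : (c - 1) / (2 * (D + c)) * (2 * (D + c)) = c - 1 := div_mul_cancel₀ _ hp.ne'
  nlinarith [mul_pos ht hD, mul_pos ht (by linarith : 0 < c)]
end

section
/- Let k > 0 and define ψ̂ : [0,∞)×(0,∞) → ℝ by ψ̂(i1,i2) = exp((k/2)·(log((i1+√(i1²−4i2))/(i1−√(i1²−4i2))))²) if i1² − 4i2 ≥ 0, and ψ̂(i1,i2) = 1 otherwise. Then ψ̂ is convex on [0,∞)×(0,∞) if and only if k ≥ 1/3. -/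
open Real Set in
lemma aux_nonneg {f f' : ℝ → ℝ} (h : ∀ x, HasDerivAt f (f' x) x) (h' : ∀ x, 0 < x → 0 ≤ f' x)
    (h0 : f 0 = 0) {x : ℝ} (hx : 0 ≤ x) : 0 ≤ f x := by
  have hm : MonotoneOn f (Ici 0) := by
    apply monotoneOn_of_deriv_nonneg (convex_Ici 0)
    · exact fun y _ => (h y).continuousAt.continuousWithinAt
    · exact fun y _ => (h y).differentiableAt.differentiableWithinAt
    · intro y hy
      rw [interior_Ici] at hy
      rw [(h y).deriv]
      exact h' y hy
  have := hm (mem_Ici.2 le_rfl) hx hx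
  rwa [h0] at this

lemma aux_sinh_le {x : ℝ} (hx : 0 ≤ x) : 0 ≤ x * Real.cosh x - Real.sinh x := by
  refine aux_nonneg (f := fun x => x * Real.cosh x - Real.sinh x)
    (f' := fun x => x * Real.sinh x) ?_ ?_ (by simp) hx
  · intro x
    have := ((hasDerivAt_id x).mul (Real.hasDerivAt_cosh x)).sub (Real.hasDerivAt_sinh x)
    refine HasDerivAt.congr_deriv this ?_
    simp
  · intro x hx
    exact mul_nonneg hx.le (Real.sinh_nonneg_iff.2 hx.le)

lemma aux_coth {x : ℝ} (hx : 0 ≤ x) :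
    0 ≤ Real.sinh x * (1 + x ^ 2 / 3) - x * Real.cosh x := by
  refine aux_nonneg (f := fun x => Real.sinh x * (1 + x ^ 2 / 3) - x * Real.cosh x)
    (f' := fun x => x / 3 * (x * Real.cosh x - Real.sinh x)) ?_ ?_ (by simp) hx
  · intro x
    have := ((Real.hasDerivAt_sinh x).mul
      ((((hasDerivAt_id x).pow 2).div_const 3).const_add 1)).sub
      ((hasDerivAt_id x).mul (Real.hasDerivAt_cosh x))
    refine HasDerivAt.congr_deriv this ?_
    simp
    ring
  · intro x hx
    exact mul_nonneg (by positivity) (aux_sinh_le hx.le)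

lemma aux_cosh_ge {x : ℝ} (hx : 0 ≤ x) : 0 ≤ Real.cosh x - 1 - x ^ 2 / 2 := by
  refine aux_nonneg (f := fun x => Real.cosh x - 1 - x ^ 2 / 2)
    (f' := fun x => Real.sinh x - x) ?_ ?_ (by simp) hx
  · intro x
    have := ((Real.hasDerivAt_cosh x).sub_const 1).sub (((hasDerivAt_id x).pow 2).div_const 2)
    refine HasDerivAt.congr_deriv this ?_
    simp
  · intro x hx
    linarith [Real.self_le_sinh_iff.2 hx.le]

lemma aux_sinh_ge {x : ℝ} (hx : 0 ≤ x) : 0 ≤ Real.sinh x - x - x ^ 3 / 6 := by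
  refine aux_nonneg (f := fun x => Real.sinh x - x - x ^ 3 / 6)
    (f' := fun x => Real.cosh x - 1 - x ^ 2 / 2) ?_ ?_ (by simp) hx
  · intro x
    have := ((Real.hasDerivAt_sinh x).sub (hasDerivAt_id x)).sub
      (((hasDerivAt_id x).pow 3).div_const 6)
    refine HasDerivAt.congr_deriv this ?_
    simp
    ring
  · intro x hx
    exact aux_cosh_ge hx.le

/-- The profile function in the variable `c = cosh L`. -/
noncomputable def auxG (k c : ℝ) : ℝ := Real.exp (k / 2 * Real.arcosh c ^ 2)

/-- The derivative of the profile, in terms of `L`. -/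
noncomputable def auxH (k x : ℝ) : ℝ := Real.exp (k / 2 * x ^ 2) * (k * x / Real.sinh x)

lemma auxG_deriv (k : ℝ) {c : ℝ} (hc : 1 < c) :
    HasDerivAt (auxG k) (auxH k (Real.arcosh c)) c := by
  have h := (((Real.hasDerivAt_arcosh (x := c) hc).pow 2).const_mul (k / 2)).exp
  rw [← Real.sinh_arcosh hc.le] at h
  unfold auxG auxH
  refine HasDerivAt.congr_deriv h ?_
  simp
  ring

lemma auxH_mono {k : ℝ} (hk : 1 / 3 ≤ k) : MonotoneOn (auxH k) (Set.Ioi 0) := by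
  have key : ∀ x : ℝ, 0 < x → HasDerivAt (auxH k)
      (Real.exp (k / 2 * x ^ 2) * k *
        (Real.sinh x * (1 + k * x ^ 2) - x * Real.cosh x) / Real.sinh x ^ 2) x := by
    intro x hx
    have hs : Real.sinh x ≠ 0 := (Real.sinh_pos_iff.2 hx).ne'
    have h := ((((hasDerivAt_id x).pow 2).const_mul (k / 2)).exp).mul
      (((hasDerivAt_id x).const_mul k).div (Real.hasDerivAt_sinh x) hs)
    refine HasDerivAt.congr_deriv h ?_
    simp
    field_simp
    ring
  apply monotoneOn_of_deriv_nonneg (convex_Ioi 0)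
  · exact fun y hy => (key y hy).continuousAt.continuousWithinAt
  · rw [interior_Ioi]
    exact fun y hy => (key y hy).differentiableAt.differentiableWithinAt
  · rw [interior_Ioi]
    intro y hy
    rw [(key y hy).deriv]
    have h1 := aux_coth (le_of_lt (Set.mem_Ioi.1 hy))
    have hs : 0 < Real.sinh y := Real.sinh_pos_iff.2 hy
    have h2 : 0 ≤ Real.sinh y * ((k - 1 / 3) * y ^ 2) :=
      mul_nonneg hs.le (mul_nonneg (by linarith) (sq_nonneg y))
    have h3 : 0 ≤ Real.sinh y * (1 + k * y ^ 2) - y * Real.cosh y := by nlinarith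
    have : 0 ≤ k := by linarith
    positivity

lemma auxG_convex {k : ℝ} (hk : 1 / 3 ≤ k) : ConvexOn ℝ (Set.Ici 1) (auxG k) := by
  apply MonotoneOn.convexOn_of_deriv (convex_Ici 1)
  · unfold auxG
    exact ((Real.continuousOn_arcosh.pow 2).const_mul (k / 2)).rexp
  · rw [interior_Ici]
    exact fun y hy => (auxG_deriv k hy).differentiableAt.differentiableWithinAt
  · rw [interior_Ici]
    intro x hx y hy hxy
    simp only [Set.mem_Ioi] at hx hy
    rw [(auxG_deriv k hx).deriv, (auxG_deriv k hy).deriv]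
    exact auxH_mono hk (Real.arcosh_pos hx) (Real.arcosh_pos hy)
      ((Real.arcosh_le_arcosh (by linarith) (by linarith)).2 hxy)

lemma auxG_mono {k : ℝ} (hk : 0 < k) : MonotoneOn (auxG k) (Set.Ici 1) := by
  intro x hx y hy hxy
  simp only [Set.mem_Ici] at hx hy
  have h := (Real.arcosh_le_arcosh (by linarith) (by linarith)).2 hxy
  have h0 := Real.arcosh_nonneg hx
  unfold auxG
  gcongr

lemma aux_eq (k : ℝ) {x y : ℝ} (hx : 0 ≤ x) (hy : 0 < y) :
    (if 0 ≤ x ^ 2 - 4 * y then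
          Real.exp ((k / 2) *
            (Real.log ((x + Real.sqrt (x ^ 2 - 4 * y)) /
              (x - Real.sqrt (x ^ 2 - 4 * y)))) ^ 2)
        else 1) = auxG k (max (x ^ 2 / (2 * y) - 1) 1) := by
  split_ifs with h
  · have hc : 1 ≤ x ^ 2 / (2 * y) - 1 := by
      rw [le_sub_iff_add_le, le_div_iff₀ (by positivity)]
      linarith
    rw [max_eq_left hc]
    unfold auxG
    obtain ⟨m, hm⟩ : ∃ m, m = Real.arcosh (x ^ 2 / (2 * y) - 1) / 2 := ⟨_, rfl⟩
    have hL : Real.arcosh (x ^ 2 / (2 * y) - 1) = 2 * m := by rw [hm]; ring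
    have hm0 : 0 ≤ m := by rw [hm]; have := Real.arcosh_nonneg hc; positivity
    have hcosh := Real.cosh_arcosh hc
    rw [hL, Real.cosh_two_mul, Real.sinh_sq] at hcosh
    have hx2 : x ^ 2 = 4 * y * Real.cosh m ^ 2 := by
      have : x ^ 2 / (2 * y) = 2 * Real.cosh m ^ 2 := by linarith
      rw [div_eq_iff (by positivity)] at this
      linarith
    have hsy : Real.sqrt y ^ 2 = y := Real.sq_sqrt hy.le
    have hsp : 0 < Real.sqrt y := Real.sqrt_pos.2 hy
    have hxe : x = 2 * Real.sqrt y * Real.cosh m := by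
      have hp := Real.cosh_pos m
      rw [← sq_eq_sq₀ hx (by positivity)]
      rw [hx2, mul_pow, mul_pow, hsy]; ring
    have hse : Real.sqrt (x ^ 2 - 4 * y) = 2 * Real.sqrt y * Real.sinh m := by
      have hp := Real.sinh_nonneg_iff.2 hm0
      rw [Real.sqrt_eq_iff_mul_self_eq h (by positivity)]
      have := Real.cosh_sq m
      rw [hx2, this]
      linear_combination (-4 * Real.sinh m ^ 2) * hsy
    have hr : (x + Real.sqrt (x ^ 2 - 4 * y)) / (x - Real.sqrt (x ^ 2 - 4 * y))
        = Real.exp (2 * m) := by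
      rw [hse, hxe, ← mul_add, ← mul_sub, Real.cosh_add_sinh, Real.cosh_sub_sinh,
        mul_div_mul_left _ _ (by positivity), ← Real.exp_sub]
      congr 1; ring
    rw [hr, Real.log_exp, hL]
  · have hc : x ^ 2 / (2 * y) - 1 ≤ 1 := by
      rw [sub_le_iff_le_add, div_le_iff₀ (by positivity)]
      linarith
    rw [max_eq_right hc]
    simp [auxG]

lemma aux_inner : ConvexOn ℝ (Set.Ici (0:ℝ) ×ˢ Set.Ioi (0:ℝ))
    (fun p : ℝ × ℝ => max (p.1 ^ 2 / (2 * p.2) - 1) 1) := by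
  have hconv : Convex ℝ (Set.Ici (0:ℝ) ×ˢ Set.Ioi (0:ℝ)) := (convex_Ici 0).prod (convex_Ioi 0)
  refine ConvexOn.sup (f := fun p : ℝ × ℝ => p.1 ^ 2 / (2 * p.2) - 1) (g := fun _ => (1:ℝ))
    ⟨hconv, ?_⟩ (convexOn_const 1 hconv)
  rintro ⟨x, y⟩ ⟨-, hy⟩ ⟨u, v⟩ ⟨-, hv⟩ a b ha hb hab
  simp only [Set.mem_Ioi] at hy hv
  simp only [Prod.smul_mk, Prod.mk_add_mk, smul_eq_mul]
  have hpos : 0 < a * y + b * v := by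
    rcases ha.eq_or_lt with rfl | ha'
    · have : b = 1 := by linarith
      subst this; simpa using hv
    · positivity
  have : (a * x + b * u) ^ 2 / (2 * (a * y + b * v))
      ≤ a * (x ^ 2 / (2 * y)) + b * (u ^ 2 / (2 * v)) := by
    rw [div_le_iff₀ (by positivity)]
    have e : (a * (x ^ 2 / (2 * y)) + b * (u ^ 2 / (2 * v))) * (2 * (a * y + b * v))
        - (a * x + b * u) ^ 2 = a * b * (x * v - u * y) ^ 2 / (y * v) := by
      field_simp
      ring
    have : 0 ≤ a * b * (x * v - u * y) ^ 2 / (y * v) := by positivity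
    linarith
  nlinarith

lemma aux_necessary {k : ℝ} (hk : 0 < k) (h : ConvexOn ℝ (Set.Ioi 1) (auxG k)) : 1 / 3 ≤ k := by
  by_contra! hlt
  have hmono : ∀ a b : ℝ, 0 < a → a ≤ b → auxH k a ≤ auxH k b := by
    intro a b ha hab
    have hca : 1 < Real.cosh a := Real.one_lt_cosh.2 ha.ne'
    have hcb : 1 < Real.cosh b := Real.one_lt_cosh.2 (by linarith)
    have hm := h.monotoneOn_deriv (fun x hx => (auxG_deriv k hx).differentiableAt)
      (show Real.cosh a ∈ Set.Ioi (1:ℝ) from hca) (show Real.cosh b ∈ Set.Ioi (1:ℝ) from hcb)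
      (Real.cosh_le_cosh.2 (abs_le_abs_of_nonneg ha.le hab))
    rwa [(auxG_deriv k hca).deriv, (auxG_deriv k hcb).deriv, Real.arcosh_cosh ha.le,
      Real.arcosh_cosh (by linarith)] at hm
  have hlow : ∀ b : ℝ, 0 < b → k ≤ auxH k b := by
    intro b hb
    have hle : ∀ a ∈ Set.Ioo 0 b, k ≤ auxH k b * Real.cosh a := by
      intro a ha
      have h1 := hmono a b ha.1 ha.2.le
      have hs := Real.sinh_pos_iff.2 ha.1
      have hc := Real.cosh_pos a
      have h2 : k ≤ auxH k a * Real.cosh a := by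
        unfold auxH
        have e1 : 1 ≤ Real.exp (k / 2 * a ^ 2) := Real.one_le_exp (by positivity)
        have e2 : k ≤ k * a / Real.sinh a * Real.cosh a := by
          rw [div_mul_eq_mul_div, le_div_iff₀ hs]
          nlinarith [aux_sinh_le ha.1.le]
        nlinarith
      exact h2.trans (by gcongr)
    have ht : Filter.Tendsto (fun a => auxH k b * Real.cosh a) (nhdsWithin 0 (Set.Ioi 0))
        (nhds (auxH k b * Real.cosh 0)) :=
      ((Real.continuous_cosh.const_mul _).tendsto 0).mono_left nhdsWithin_le_nhds
    rw [Real.cosh_zero, mul_one] at ht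
    refine ge_of_tendsto ht ?_
    filter_upwards [Ioo_mem_nhdsGT hb] with a ha using hle a ha
  obtain ⟨d, hd⟩ : ∃ d, d = 1 / 6 - k / 2 := ⟨_, rfl⟩
  have hd0 : 0 < d := by rw [hd]; linarith
  have hb := Real.sqrt_pos.2 hd0
  have hb2 := Real.sq_sqrt hd0.le
  have h1 := hlow _ hb
  have hs := aux_sinh_ge hb.le
  have hsp := Real.sinh_pos_iff.2 hb
  set b := Real.sqrt d
  unfold auxH at h1
  rw [← mul_div_assoc, le_div_iff₀ hsp] at h1
  have h2 : Real.sinh b ≤ Real.exp (k / 2 * b ^ 2) * b := by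
    have : k * Real.sinh b ≤ k * (Real.exp (k / 2 * b ^ 2) * b) := by linarith
    exact le_of_mul_le_mul_left this hk
  have h3 : 1 + b ^ 2 / 6 ≤ Real.exp (k / 2 * b ^ 2) := by
    have : (1 + b ^ 2 / 6) * b ≤ Real.exp (k / 2 * b ^ 2) * b := by nlinarith
    exact le_of_mul_le_mul_right this hb
  rw [hb2] at h3
  have h4 : 1 - k / 2 * d ≤ Real.exp (-(k / 2 * d)) := by
    linarith [Real.add_one_le_exp (-(k / 2 * d))]
  have h5 : Real.exp (k / 2 * d) * Real.exp (-(k / 2 * d)) = 1 := by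
    rw [← Real.exp_add]; simp
  have hd1 : d < 1 / 6 := by rw [hd]; linarith
  have h6 : 0 < 1 - k / 2 * d := by nlinarith
  have h7 : (1 + d / 6) * (1 - k / 2 * d) ≤ 1 := by
    calc _ ≤ Real.exp (k / 2 * d) * Real.exp (-(k / 2 * d)) := by gcongr
      _ = 1 := h5
  have h8 : d * (d - k * d / 12) ≤ 0 := by
    have : d * (d - k * d / 12) = (1 + d / 6) * (1 - k / 2 * d) - 1 := by
      linear_combination d * hd
    linarith
  have h9 : 0 < d * (d - k * d / 12) := by
    apply mul_pos hd0
    nlinarith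
  linarith


theorem extended_psi_convex_iff (k : ℝ) (hk : 0 < k) :
    ConvexOn ℝ (Set.Ici (0:ℝ) ×ˢ Set.Ioi (0:ℝ))
      (fun p : ℝ × ℝ =>
        if 0 ≤ p.1 ^ 2 - 4 * p.2 then
          Real.exp ((k / 2) *
            (Real.log ((p.1 + Real.sqrt (p.1 ^ 2 - 4 * p.2)) /
              (p.1 - Real.sqrt (p.1 ^ 2 - 4 * p.2)))) ^ 2)
        else 1) ↔ k ≥ 1 / 3 := by
  have heq : Set.EqOn (fun p : ℝ × ℝ =>
        if 0 ≤ p.1 ^ 2 - 4 * p.2 then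
          Real.exp ((k / 2) *
            (Real.log ((p.1 + Real.sqrt (p.1 ^ 2 - 4 * p.2)) /
              (p.1 - Real.sqrt (p.1 ^ 2 - 4 * p.2)))) ^ 2)
        else 1) (fun p : ℝ × ℝ => auxG k (max (p.1 ^ 2 / (2 * p.2) - 1) 1))
        (Set.Ici (0:ℝ) ×ˢ Set.Ioi (0:ℝ)) := fun p hp => aux_eq k hp.1 hp.2
  constructor
  · intro h
    have h' := h.congr heq
    apply aux_necessary hk
    refine ⟨convex_Ioi 1, ?_⟩
    intro c hc d hd a b ha hb hab
    simp only [Set.mem_Ioi] at hc hd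
    have ev : ∀ c : ℝ, 1 < c →
        max ((2 * c + 2) ^ 2 / (2 * (2 * c + 2)) - 1) 1 = c := by
      intro c hc
      have : (2 * c + 2) ^ 2 / (2 * (2 * c + 2)) - 1 = c := by
        field_simp
        ring
      rw [this, max_eq_left hc.le]
    have hcd : 1 < a * c + b * d := (convex_Ioi (1:ℝ)) hc hd ha hb hab
    have := h'.2 (x := (2 * c + 2, 2 * c + 2))
      ⟨by simp only [Set.mem_Ici]; linarith, by simp only [Set.mem_Ioi]; linarith⟩
      (y := (2 * d + 2, 2 * d + 2))
      ⟨by simp only [Set.mem_Ici]; linarith, by simp only [Set.mem_Ioi]; linarith⟩ ha hb hab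
    simp only [Prod.smul_mk, Prod.mk_add_mk, smul_eq_mul] at this ⊢
    have e : a * (2 * c + 2) + b * (2 * d + 2) = 2 * (a * c + b * d) + 2 := by
      linear_combination 2 * hab
    rwa [e, ev c hc, ev d hd, ev _ hcd] at this
  · intro hk3
    refine ConvexOn.congr ?_ heq.symm
    refine ⟨aux_inner.1, ?_⟩
    intro p hp q hq a b ha hb hab
    have hi := aux_inner.2 hp hq ha hb hab
    have hm : ∀ p : ℝ × ℝ, max (p.1 ^ 2 / (2 * p.2) - 1) 1 ∈ Set.Ici (1:ℝ) :=
      fun p => Set.mem_Ici.2 (le_max_right _ _)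
    exact (auxG_mono hk (hm _) ((convex_Ici (1:ℝ)) (hm p) (hm q) ha hb hab) hi).trans
      ((auxG_convex hk3).2 (hm p) (hm q) ha hb hab)
end

section
/- Let k ≥ 1/3. Then there exists a function ψ̂ : ℝ² → ℝ which is convex on [0,∞)×(0,∞), nondecreasing in its first argument on [0,∞)×(0,∞) (i.e. ψ̂(i1,i2) ≤ ψ̂(i1',i2) whenever 0 ≤ i1 ≤ i1' and i2 > 0), and satisfies ψ̂(λ1+λ2, λ1λ2) = exp((k/2)·(log(λ1/λ2))²) for all λ1, λ2 > 0. -/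
theorem st_mono_aux (f f' : ℝ → ℝ) (a b : ℝ) (hab : a ≤ b)
    (hd : ∀ x ∈ Set.Icc a b, HasDerivAt f (f' x) x)
    (hn : ∀ x ∈ Set.Icc a b, 0 ≤ f' x) : f a ≤ f b := by
  have h : MonotoneOn f (Set.Icc a b) := by
    apply monotoneOn_of_deriv_nonneg (convex_Icc a b)
    · exact fun x hx => (hd x hx).continuousAt.continuousWithinAt
    · exact fun x hx => (hd x (interior_subset hx)).differentiableAt.differentiableWithinAt
    · intro x hx
      rw [(hd x (interior_subset hx)).deriv]
      exact hn x (interior_subset hx)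
  exact h ⟨le_refl a, hab⟩ ⟨hab, le_refl b⟩ hab

theorem st_sinh_le (s : ℝ) (hs : 0 ≤ s) : Real.sinh s ≤ s * Real.cosh s := by
  have := st_mono_aux (fun x => x * Real.cosh x - Real.sinh x)
    (fun x => x * Real.sinh x) 0 s hs
    (fun x _ => by
      have := ((hasDerivAt_id x).mul (Real.hasDerivAt_cosh x)).sub (Real.hasDerivAt_sinh x)
      refine this.congr_deriv ?_
      simp)
    (fun x hx => mul_nonneg hx.1 (Real.sinh_nonneg_iff.2 hx.1))
  simp at this
  linarith

theorem st_key (s : ℝ) (hs : 0 ≤ s) :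
    s * Real.cosh s ≤ (1 + s ^ 2 / 3) * Real.sinh s := by
  have := st_mono_aux (fun x => (1 + x ^ 2 / 3) * Real.sinh x - x * Real.cosh x)
    (fun x => x / 3 * (x * Real.cosh x - Real.sinh x)) 0 s hs
    (fun x _ => by
      have := ((((hasDerivAt_pow 2 x).div_const 3).const_add 1).mul (Real.hasDerivAt_sinh x)).sub
        ((hasDerivAt_id x).mul (Real.hasDerivAt_cosh x))
      refine this.congr_deriv ?_
      simp
      ring)
    (fun x hx => mul_nonneg (by linarith [hx.1]) (by linarith [st_sinh_le x hx.1]))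
  simp at this
  linarith

theorem st_hasDeriv_E (k x : ℝ) :
    HasDerivAt (fun x => Real.exp (k / 2 * x ^ 2)) (k * x * Real.exp (k / 2 * x ^ 2)) x := by
  have := ((hasDerivAt_pow 2 x).const_mul (k / 2)).exp
  refine this.congr_deriv ?_
  simp
  ring

theorem st_M_mono (k : ℝ) (hk : k ≥ 1 / 3) (a b : ℝ) (ha : 0 < a) (hab : a ≤ b) :
    a * Real.exp (k / 2 * a ^ 2) / Real.sinh a ≤ b * Real.exp (k / 2 * b ^ 2) / Real.sinh b := by
  refine st_mono_aux (fun x => x * Real.exp (k / 2 * x ^ 2) / Real.sinh x)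
    (fun x => Real.exp (k / 2 * x ^ 2) * ((1 + k * x ^ 2) * Real.sinh x - x * Real.cosh x)
      / Real.sinh x ^ 2) a b hab ?_ ?_
  · intro x hx
    have hx0 : 0 < x := lt_of_lt_of_le ha hx.1
    have := ((hasDerivAt_id x).mul (st_hasDeriv_E k x)).div (Real.hasDerivAt_sinh x)
      (Real.sinh_pos_iff.2 hx0).ne'
    refine this.congr_deriv ?_
    simp
    ring
  · intro x hx
    have hx0 : 0 < x := lt_of_lt_of_le ha hx.1
    have h1 := st_key x hx0.le
    have h2 := Real.sinh_pos_iff.2 hx0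
    have h3 : 0 ≤ (k - 1 / 3) * (x ^ 2 * Real.sinh x) :=
      mul_nonneg (by linarith) (by positivity)
    refine div_nonneg (mul_nonneg (Real.exp_pos _).le ?_) (sq_nonneg _)
    nlinarith

theorem st_support (k : ℝ) (hk : k ≥ 1 / 3) (a s : ℝ) (ha : 0 < a) (hs : 0 ≤ s) :
    Real.exp (k / 2 * a ^ 2) + k * (a * Real.exp (k / 2 * a ^ 2) / Real.sinh a) *
      (Real.cosh s - Real.cosh a) ≤ Real.exp (k / 2 * s ^ 2) := by
  set c := a * Real.exp (k / 2 * a ^ 2) / Real.sinh a with hc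
  have hd : ∀ x, HasDerivAt (fun x => Real.exp (k / 2 * x ^ 2) - k * c * Real.cosh x)
      (k * x * Real.exp (k / 2 * x ^ 2) - k * c * Real.sinh x) x := fun x =>
    (st_hasDeriv_E k x).sub ((Real.hasDerivAt_cosh x).const_mul (k * c))
  have hk0 : 0 < k := by linarith
  rcases le_total a s with h | h
  · have := st_mono_aux _ _ a s h (fun x _ => hd x) (fun x hx => by
      have hx0 : 0 < x := lt_of_lt_of_le ha hx.1
      have h1 := st_M_mono k hk a x ha hx.1
      rw [← hc, le_div_iff₀ (Real.sinh_pos_iff.2 hx0)] at h1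
      have := mul_le_mul_of_nonneg_left h1 hk0.le
      linarith)
    beta_reduce at this
    linarith
  · have := st_mono_aux _ _ s a h (fun x _ => (hd x).neg) (fun x hx => by
      rcases (hs.trans hx.1).eq_or_lt with hx0 | hx0
      · subst hx0; simp
      have h1 := st_M_mono k hk x a hx0 hx.2
      rw [← hc, div_le_iff₀ (Real.sinh_pos_iff.2 hx0)] at h1
      have := mul_le_mul_of_nonneg_left h1 hk0.le
      linarith)
    simp only [Pi.neg_apply] at this
    linarith

/-- The energy as a function of `t = i1 ^ 2 / i2`. -/
noncomputable def stG (k t : ℝ) : ℝ :=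
  Real.exp (k / 2 * Real.arcosh (max 1 (t / 2 - 1)) ^ 2)

theorem stG_support (k : ℝ) (hk : k ≥ 1 / 3) (z : ℝ) :
    ∃ m : ℝ, 0 ≤ m ∧ ∀ t, stG k z + m * (t - z) ≤ stG k t := by
  have hk0 : 0 < k := by linarith
  by_cases hz : 1 < z / 2 - 1
  · have ha := Real.arcosh_pos hz
    have hca := Real.cosh_arcosh hz.le
    have hsa := Real.sinh_pos_iff.2 ha
    refine ⟨k * (Real.arcosh (z / 2 - 1) * Real.exp (k / 2 * Real.arcosh (z / 2 - 1) ^ 2)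
      / Real.sinh (Real.arcosh (z / 2 - 1))) / 2, by positivity, fun t => ?_⟩
    have h := st_support k hk _ _ ha (Real.arcosh_nonneg (le_max_left 1 (t / 2 - 1)))
    rw [Real.cosh_arcosh (le_max_left 1 (t / 2 - 1)), hca] at h
    unfold stG
    rw [max_eq_right hz.le]
    refine le_trans ?_ h
    have hm : 0 ≤ k * (Real.arcosh (z / 2 - 1) * Real.exp (k / 2 * Real.arcosh (z / 2 - 1) ^ 2)
      / Real.sinh (Real.arcosh (z / 2 - 1))) := by positivity
    have := mul_le_mul_of_nonneg_left (le_max_right 1 (t / 2 - 1)) hm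
    linarith
  · refine ⟨0, le_refl _, fun t => ?_⟩
    unfold stG
    rw [max_eq_left (not_lt.1 hz)]
    simp
    positivity

theorem stG_mono (k : ℝ) (hk : k ≥ 1 / 3) {s t : ℝ} (h : s ≤ t) : stG k s ≤ stG k t := by
  obtain ⟨m, hm, H⟩ := stG_support k hk s
  have := H t
  have := mul_nonneg hm (sub_nonneg.2 h)
  linarith

theorem st_quad (x1 y1 x2 y2 p q : ℝ) (h1 : 0 < y1) (h2 : 0 < y2) (hp : 0 ≤ p) (hq : 0 ≤ q)
    (hpq : p + q = 1) :
    (p * x1 + q * x2) ^ 2 / (p * y1 + q * y2) ≤ p * (x1 ^ 2 / y1) + q * (x2 ^ 2 / y2) := by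
  have hy : 0 < p * y1 + q * y2 := by
    rcases hp.eq_or_lt with h | h
    · have : q = 1 := by linarith
      subst this; subst h; simpa using h2
    · have := mul_pos h h1
      have := mul_nonneg hq h2.le
      linarith
  rw [div_le_iff₀ hy, ← sub_nonneg]
  have : (p * (x1 ^ 2 / y1) + q * (x2 ^ 2 / y2)) * (p * y1 + q * y2) - (p * x1 + q * x2) ^ 2
      = p * q * (x1 * y2 - x2 * y1) ^ 2 / (y1 * y2) := by
    field_simp
    ring
  rw [this]
  positivity

theorem steigmann_representation_exists (k : ℝ) (hk : k ≥ 1 / 3) :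
    ∃ ψ : ℝ × ℝ → ℝ,
      ConvexOn ℝ (Set.Ici (0:ℝ) ×ˢ Set.Ioi (0:ℝ)) ψ ∧
      (∀ i1 i1' i2 : ℝ, 0 ≤ i1 → i1 ≤ i1' → 0 < i2 → ψ (i1, i2) ≤ ψ (i1', i2)) ∧
      (∀ l1 l2 : ℝ, 0 < l1 → 0 < l2 →
        ψ (l1 + l2, l1 * l2) = Real.exp ((k / 2) * (Real.log (l1 / l2)) ^ 2)) := by
  refine ⟨fun P => stG k (P.1 ^ 2 / P.2), ⟨(convex_Ici 0).prod (convex_Ioi 0), ?_⟩, ?_, ?_⟩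
  · rintro ⟨x1, y1⟩ ⟨_, h1⟩ ⟨x2, y2⟩ ⟨_, h2⟩ p q hp hq hpq
    simp only [Set.mem_Ioi] at h1 h2
    simp only [Prod.smul_mk, Prod.mk_add_mk, smul_eq_mul]
    obtain ⟨m, hm, H⟩ := stG_support k hk ((p * x1 + q * x2) ^ 2 / (p * y1 + q * y2))
    have hc := mul_le_mul_of_nonneg_left (st_quad x1 y1 x2 y2 p q h1 h2 hp hq hpq) hm
    have e1 := mul_le_mul_of_nonneg_left (H (x1 ^ 2 / y1)) hp
    have e2 := mul_le_mul_of_nonneg_left (H (x2 ^ 2 / y2)) hq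
    obtain rfl : q = 1 - p := by linarith
    linarith
  · intro i1 i1' i2 h0 h hi
    apply stG_mono k hk
    show i1 ^ 2 / i2 ≤ i1' ^ 2 / i2
    gcongr
  · intro l1 l2 h1 h2
    have hpos : 0 < l1 / l2 := div_pos h1 h2
    have e : (l1 + l2) ^ 2 / (l1 * l2) / 2 - 1 = Real.cosh |Real.log (l1 / l2)| := by
      rw [Real.cosh_abs, Real.cosh_log hpos]
      field_simp
      ring
    show stG k ((l1 + l2) ^ 2 / (l1 * l2)) = _
    unfold stG
    rw [e, max_eq_right (Real.one_le_cosh _), Real.arcosh_cosh (abs_nonneg _), sq_abs]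
end

section
/- Let k̂ > 0. The function t ↦ exp(k̂·(log t)²) is convex on (0,∞) if and only if k̂ ≥ 1/8. -/
theorem vol_d1 (k x : ℝ) (hx : 0 < x) :
    HasDerivAt (fun t : ℝ => Real.exp (k * (Real.log t) ^ 2))
      (Real.exp (k * (Real.log x) ^ 2) * (2 * k * Real.log x / x)) x := by
  have h1 := ((((Real.hasDerivAt_log hx.ne').fun_pow 2).const_mul k)).exp
  refine h1.congr_deriv ?_
  simp
  ring

theorem vol_d2 (k x : ℝ) (hx : 0 < x) :
    HasDerivAt (fun t : ℝ => Real.exp (k * (Real.log t) ^ 2) * (2 * k * Real.log t / t))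
      (Real.exp (k * (Real.log x) ^ 2) *
        (2 * k * (2 * k * (Real.log x) ^ 2 - Real.log x + 1) / x ^ 2)) x := by
  have h1 := (vol_d1 k x hx).fun_mul
    (((Real.hasDerivAt_log hx.ne').const_mul (2 * k)).fun_div (hasDerivAt_id' x) hx.ne')
  refine h1.congr_deriv ?_
  field_simp
  ring

theorem volumetric_exp_convex_iff (khat : ℝ) (h : 0 < khat) :
    ConvexOn ℝ (Set.Ioi (0:ℝ)) (fun t : ℝ => Real.exp (khat * (Real.log t) ^ 2)) ↔
      khat ≥ 1 / 8 := by
  constructor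
  · intro hc
    have hm := hc.monotoneOn_deriv (fun x hx => (vol_d1 khat x hx).differentiableAt)
    have hm2 : MonotoneOn
        (fun t : ℝ => Real.exp (khat * (Real.log t) ^ 2) * (2 * khat * Real.log t / t))
        (Set.Ioi 0) := hm.congr (fun x hx => (vol_d1 khat x hx).deriv)
    have hx : 0 < Real.exp (1 / (4 * khat)) := Real.exp_pos _
    have h0 := hm2.derivWithin_nonneg (x := Real.exp (1 / (4 * khat)))
    rw [derivWithin_of_isOpen isOpen_Ioi hx, (vol_d2 khat _ hx).deriv, Real.log_exp] at h0
    have h1 := nonneg_of_mul_nonneg_right h0 (Real.exp_pos _)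
    rw [le_div_iff₀ (by positivity), zero_mul] at h1
    have h2 := nonneg_of_mul_nonneg_right h1 (by positivity)
    have h3 : 2 * khat * (1 / (4 * khat)) ^ 2 - 1 / (4 * khat) + 1
        = (8 * khat - 1) / (8 * khat) := by
      field_simp
      ring
    rw [h3, le_div_iff₀ (by positivity)] at h2
    linarith
  · intro hk
    refine convexOn_of_hasDerivWithinAt2_nonneg (convex_Ioi 0)
      (fun x hx => (vol_d1 khat x hx).continuousAt.continuousWithinAt)
      (f' := fun x => Real.exp (khat * (Real.log x) ^ 2) * (2 * khat * Real.log x / x))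
      (f'' := fun x => Real.exp (khat * (Real.log x) ^ 2) *
        (2 * khat * (2 * khat * (Real.log x) ^ 2 - Real.log x + 1) / x ^ 2)) ?_ ?_ ?_
    all_goals
      rw [interior_Ioi]
      intro x hx
    · exact (vol_d1 khat x hx).hasDerivWithinAt
    · exact (vol_d2 khat x hx).hasDerivWithinAt
    · have : 0 ≤ 2 * khat * (Real.log x) ^ 2 - Real.log x + 1 := by
        nlinarith [sq_nonneg (Real.log x - 2),
          mul_nonneg (sub_nonneg.2 hk) (sq_nonneg (Real.log x))]
      positivity
end

section
/- For every α > 0 there exists a constant K > 0 such that exp((log t)²) ≥ K·|t − 1|^α for all t > 0. -/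
theorem unconditional_coercivity_1D (α : ℝ) (hα : 0 < α) :
    ∃ K : ℝ, 0 < K ∧ ∀ t : ℝ, 0 < t →
      Real.exp ((Real.log t) ^ 2) ≥ K * |t - 1| ^ α := by
  refine ⟨Real.exp (-(α ^ 2 / 4)), Real.exp_pos _, fun t ht => ?_⟩
  rcases le_total t 1 with h | h
  · have h1 : |t - 1| ^ α ≤ 1 :=
      Real.rpow_le_one (abs_nonneg _) (by rw [abs_le]; constructor <;> linarith) hα.le
    have h2 : Real.exp (-(α ^ 2 / 4)) ≤ 1 := Real.exp_le_one_iff.mpr (by nlinarith [sq_nonneg α])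
    have h3 : 1 ≤ Real.exp ((Real.log t) ^ 2) := Real.one_le_exp (sq_nonneg _)
    have h4 : 0 ≤ |t - 1| ^ α := Real.rpow_nonneg (abs_nonneg _) _
    exact (mul_le_one₀ h2 h4 h1).trans h3
  · have h1 : |t - 1| ^ α ≤ t ^ α :=
      Real.rpow_le_rpow (abs_nonneg _) (by rw [abs_le]; constructor <;> linarith) hα.le
    calc Real.exp (-(α ^ 2 / 4)) * |t - 1| ^ α
        ≤ Real.exp (-(α ^ 2 / 4)) * t ^ α :=
          mul_le_mul_of_nonneg_left h1 (Real.exp_pos _).le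
      _ = Real.exp (-(α ^ 2 / 4) + Real.log t * α) := by
          rw [Real.rpow_def_of_pos ht, Real.exp_add]
      _ ≤ Real.exp ((Real.log t) ^ 2) :=
          Real.exp_le_exp.mpr (by nlinarith [sq_nonneg (Real.log t - α / 2)])
end

section
/- For all α > 0 and β > 0 there exists a constant K > 0 such that exp(β·(log t)²) ≥ K·|t − 1|^{αβ} for all t > 0. -/
theorem unconditional_coercivity_1D_scaled (α β : ℝ) (hα : 0 < α) (hβ : 0 < β) :
    ∃ K : ℝ, 0 < K ∧ ∀ t : ℝ, 0 < t →
      Real.exp (β * (Real.log t) ^ 2) ≥ K * |t - 1| ^ (α * β) := by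
  refine ⟨Real.exp (-(β * α ^ 2 / 4)), Real.exp_pos _, fun t ht => ?_⟩
  have h1 : |t - 1| ≤ Real.exp |Real.log t| := by
    have ha : t ≤ Real.exp |Real.log t| := by
      calc t = Real.exp (Real.log t) := (Real.exp_log ht).symm
        _ ≤ _ := Real.exp_le_exp.mpr (le_abs_self _)
    have hb : 1 ≤ Real.exp |Real.log t| := Real.one_le_exp (abs_nonneg _)
    rw [abs_le]
    constructor <;> linarith
  have h2 : |t - 1| ^ (α * β) ≤ Real.exp (|Real.log t| * (α * β)) := by
    rw [Real.exp_mul]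
    exact Real.rpow_le_rpow (abs_nonneg _) h1 (by positivity)
  calc Real.exp (-(β * α ^ 2 / 4)) * |t - 1| ^ (α * β)
      ≤ Real.exp (-(β * α ^ 2 / 4)) * Real.exp (|Real.log t| * (α * β)) := by gcongr
    _ = Real.exp (-(β * α ^ 2 / 4) + |Real.log t| * (α * β)) := (Real.exp_add _ _).symm
    _ ≤ Real.exp (β * (Real.log t) ^ 2) := by
      rw [Real.exp_le_exp, ← sq_abs (Real.log t)]
      nlinarith [mul_nonneg hβ.le (sq_nonneg (|Real.log t| - α / 2))]
end

section
/- Let α, β > 0. Then there exist constants K1, K2 > 0 such that for all λ1, λ2 > 0 one has exp(β·((log λ1)² + (log λ2)²)) ≥ K1·((λ1−1)² + (λ2−1)²)^{αβ/2} − K2. -/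
theorem coercivity_aux (l s : ℝ) (hl : 0 < l) (h : |Real.log l| ≤ s) :
    (l - 1) ^ 2 ≤ Real.exp (2 * s) := by
  have h1 : l ≤ Real.exp s := by
    rw [← Real.log_le_iff_le_exp hl]
    exact (le_abs_self _).trans h
  have h2 : 1 ≤ Real.exp s := Real.one_le_exp ((abs_nonneg _).trans h)
  have h3 : Real.exp (2 * s) = Real.exp s ^ 2 := by
    rw [← Real.exp_nat_mul]; norm_num
  rw [h3]
  exact sq_le_sq' (by linarith) (by linarith)

theorem coercivity_2D (α β : ℝ) (hα : 0 < α) (hβ : 0 < β) :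
    ∃ K1 K2 : ℝ, 0 < K1 ∧ 0 < K2 ∧ ∀ l1 l2 : ℝ, 0 < l1 → 0 < l2 →
      Real.exp (β * ((Real.log l1) ^ 2 + (Real.log l2) ^ 2)) ≥
        K1 * ((l1 - 1) ^ 2 + (l2 - 1) ^ 2) ^ (α * β / 2) - K2 := by
  refine ⟨Real.exp (-(β * (α ^ 2 / 2 + α / 2))), 1, Real.exp_pos _, one_pos, ?_⟩
  intro l1 l2 h1 h2
  set x := Real.log l1 with hx
  set y := Real.log l2 with hy
  have a1 := coercivity_aux l1 (|x| + |y|) h1 (by linarith [abs_nonneg y])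
  have a2 := coercivity_aux l2 (|x| + |y|) h2 (by linarith [abs_nonneg x])
  have a3 : (l1 - 1) ^ 2 + (l2 - 1) ^ 2 ≤ Real.exp (2 * (|x| + |y|) + 1) := by
    rw [Real.exp_add]
    nlinarith [Real.add_one_le_exp (1 : ℝ), Real.exp_pos (2 * (|x| + |y|))]
  have a4 : ((l1 - 1) ^ 2 + (l2 - 1) ^ 2) ^ (α * β / 2)
      ≤ Real.exp ((2 * (|x| + |y|) + 1) * (α * β / 2)) := by
    rw [Real.exp_mul]
    exact Real.rpow_le_rpow (by positivity) a3 (by positivity)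
  have a5 : Real.exp (-(β * (α ^ 2 / 2 + α / 2)))
      * Real.exp ((2 * (|x| + |y|) + 1) * (α * β / 2))
      ≤ Real.exp (β * (x ^ 2 + y ^ 2)) := by
    rw [← Real.exp_add]
    apply Real.exp_le_exp.mpr
    have : 0 ≤ β * ((|x| - α / 2) ^ 2 + (|y| - α / 2) ^ 2) := by positivity
    rw [← sq_abs x, ← sq_abs y]
    linarith
  have a6 := mul_le_mul_of_nonneg_left a4
    (Real.exp_pos (-(β * (α ^ 2 / 2 + α / 2)))).le
  linarith
end

section
/- Let k > 0. There do not exist constants K1, K2, α > 0 such that exp((k/2)·(log(λ1/λ2))²) ≥ K1·((λ1−1)² + (λ2−1)²)^{αk/2} − K2 for all λ1, λ2 > 0. -/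
theorem isochoric_not_coercive_U (k : ℝ) (hk : 0 < k) :
    ¬ ∃ K1 K2 α : ℝ, 0 < K1 ∧ 0 < K2 ∧ 0 < α ∧
      ∀ l1 l2 : ℝ, 0 < l1 → 0 < l2 →
        Real.exp ((k / 2) * (Real.log (l1 / l2)) ^ 2) ≥
          K1 * ((l1 - 1) ^ 2 + (l2 - 1) ^ 2) ^ (α * k / 2) - K2 := by
  rintro ⟨K1, K2, α, h1, h2, ha, h⟩
  have hp : 0 < α * k / 2 := by positivity
  obtain ⟨y, hy, hy0⟩ := (((tendsto_rpow_atTop hp).eventually_gt_atTop ((1 + K2) / K1)).and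
    (Filter.eventually_ge_atTop (0 : ℝ))).exists
  have ht : 0 < 1 + Real.sqrt (y / 2) := by positivity
  have h3 := h _ _ ht ht
  have h4 : (1 + Real.sqrt (y / 2) - 1) ^ 2 + (1 + Real.sqrt (y / 2) - 1) ^ 2 = y := by
    rw [add_sub_cancel_left, Real.sq_sqrt (by positivity)]
    ring
  rw [h4, div_self ht.ne'] at h3
  simp at h3
  rw [div_lt_iff₀ h1] at hy
  linarith
end

section
/- Let k > 0. There do not exist constants K1, K2, α > 0 such that exp((k/2)·(log(λ1/λ2))²) ≥ K1·(|λ1 − λ2|/√2)^{αk} − K2 for all λ1, λ2 > 0. -/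
theorem isochoric_not_coercive_devU (k : ℝ) (hk : 0 < k) :
    ¬ ∃ K1 K2 α : ℝ, 0 < K1 ∧ 0 < K2 ∧ 0 < α ∧
      ∀ l1 l2 : ℝ, 0 < l1 → 0 < l2 →
        Real.exp ((k / 2) * (Real.log (l1 / l2)) ^ 2) ≥
          K1 * (|l1 - l2| / Real.sqrt 2) ^ (α * k) - K2 := by
  rintro ⟨K1, K2, α, h1, h2, hα, h⟩
  have ht := tendsto_rpow_atTop (mul_pos hα hk)
  obtain ⟨x, hx, hx0⟩ := ((ht.eventually_gt_atTop
    ((Real.exp ((k / 2) * (Real.log 2) ^ 2) + K2) / K1)).and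
    (Filter.eventually_gt_atTop 0)).exists
  have hs : 0 < Real.sqrt 2 := by positivity
  have hp : 0 < x * Real.sqrt 2 := by positivity
  have := h (2 * (x * Real.sqrt 2)) (x * Real.sqrt 2) (by positivity) hp
  have e1 : 2 * (x * Real.sqrt 2) / (x * Real.sqrt 2) = 2 := mul_div_cancel_right₀ _ hp.ne'
  have e2 : |2 * (x * Real.sqrt 2) - x * Real.sqrt 2| / Real.sqrt 2 = x := by
    rw [show 2 * (x * Real.sqrt 2) - x * Real.sqrt 2 = x * Real.sqrt 2 by ring, abs_of_pos hp]
    exact mul_div_cancel_right₀ _ hs.ne'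
  rw [e1, e2] at this
  rw [div_lt_iff₀ h1] at hx
  linarith
end

section
/- Let μ, κ, k, k̂ > 0 and α1, α2 > 0. Then there exist constants C1, C2, C3 > 0 such that for all λ1, λ2 > 0: (μ/k)·exp((k/2)·(log(λ1/λ2))²) + (κ/(2k̂))·exp(k̂·(log(λ1λ2))²) ≥ C1·((√(λ1/λ2) − 1)² + (√(λ2/λ1) − 1)²)^{α1·k/2} + C2·|λ1λ2 − 1|^{α2·k̂} − C3. -/
theorem coer_aux (A a p : ℝ) (hA : 0 < A) (ha : 0 < a) (hp : 0 < p) :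
    ∃ C : ℝ, 0 < C ∧ ∀ t B : ℝ, 0 ≤ B → B ≤ 2 * Real.exp |t| →
      C * B ^ p ≤ A * Real.exp (a * t ^ 2) := by
  refine ⟨A * Real.exp (-(p ^ 2 / (4 * a))) / 2 ^ p, by positivity, ?_⟩
  intro t B hB hBt
  have h1 : B ^ p ≤ 2 ^ p * Real.exp (|t| * p) := by
    have := Real.rpow_le_rpow hB hBt hp.le
    rwa [Real.mul_rpow (by norm_num) (Real.exp_pos _).le, ← Real.exp_mul] at this
  have h2 : -(p ^ 2 / (4 * a)) + |t| * p ≤ a * t ^ 2 := by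
    have : a * t ^ 2 - (-(p ^ 2 / (4 * a)) + |t| * p) = (2 * a * |t| - p) ^ 2 / (4 * a) := by
      rw [← sq_abs t]
      field_simp
      ring
    have h3 : 0 ≤ (2 * a * |t| - p) ^ 2 / (4 * a) := by positivity
    linarith
  calc A * Real.exp (-(p ^ 2 / (4 * a))) / 2 ^ p * B ^ p
      ≤ A * Real.exp (-(p ^ 2 / (4 * a))) / 2 ^ p * (2 ^ p * Real.exp (|t| * p)) := by gcongr
    _ = A * Real.exp (-(p ^ 2 / (4 * a)) + |t| * p) := by
      rw [Real.exp_add]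
      have : (2 : ℝ) ^ p ≠ 0 := by positivity
      field_simp
    _ ≤ _ := by gcongr

theorem le_exp_abs_log (x : ℝ) (hx : 0 < x) : x ≤ Real.exp |Real.log x| := by
  calc x = Real.exp (Real.log x) := (Real.exp_log hx).symm
    _ ≤ _ := Real.exp_le_exp.2 (le_abs_self _)

theorem sqrt_aux (x : ℝ) (hx : 0 < x) :
    (Real.sqrt x - 1) ^ 2 ≤ Real.exp |Real.log x| := by
  have h1 := le_exp_abs_log x hx
  have h2 : 1 ≤ Real.exp |Real.log x| := Real.one_le_exp (abs_nonneg _)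
  have h3 := Real.sq_sqrt hx.le
  have h4 := Real.sqrt_nonneg x
  rcases le_total (Real.sqrt x) 1 with h | h <;> nlinarith

theorem coercivity_dev_tr (μ κ k khat α1 α2 : ℝ)
    (hμ : 0 < μ) (hκ : 0 < κ) (hk : 0 < k) (hkhat : 0 < khat)
    (hα1 : 0 < α1) (hα2 : 0 < α2) :
    ∃ C1 C2 C3 : ℝ, 0 < C1 ∧ 0 < C2 ∧ 0 < C3 ∧
      ∀ l1 l2 : ℝ, 0 < l1 → 0 < l2 →
        (μ / k) * Real.exp ((k / 2) * (Real.log (l1 / l2)) ^ 2) +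
            (κ / (2 * khat)) * Real.exp (khat * (Real.log (l1 * l2)) ^ 2) ≥
          C1 * ((Real.sqrt (l1 / l2) - 1) ^ 2 + (Real.sqrt (l2 / l1) - 1) ^ 2) ^ (α1 * k / 2) +
            C2 * |l1 * l2 - 1| ^ (α2 * khat) - C3 := by
  obtain ⟨C1, hC1, H1⟩ := coer_aux (μ / k) (k / 2) (α1 * k / 2)
    (by positivity) (by positivity) (by positivity)
  obtain ⟨C2, hC2, H2⟩ := coer_aux (κ / (2 * khat)) khat (α2 * khat)
    (by positivity) (by positivity) (by positivity)
  refine ⟨C1, C2, 1, hC1, hC2, one_pos, ?_⟩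
  intro l1 l2 h1 h2
  have e1 := H1 (Real.log (l1 / l2))
    ((Real.sqrt (l1 / l2) - 1) ^ 2 + (Real.sqrt (l2 / l1) - 1) ^ 2) (by positivity) (by
      have a1 := sqrt_aux (l1 / l2) (by positivity)
      have a2 := sqrt_aux (l2 / l1) (by positivity)
      rw [← inv_div l1 l2, Real.log_inv, abs_neg, inv_div] at a2
      linarith)
  have e2 := H2 (Real.log (l1 * l2)) |l1 * l2 - 1| (abs_nonneg _) (by
      have hm : 0 < l1 * l2 := by positivity
      have b1 := le_exp_abs_log _ hm
      have b2 : 1 ≤ Real.exp |Real.log (l1 * l2)| := Real.one_le_exp (abs_nonneg _)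
      rw [abs_le]
      constructor <;> linarith)
  linarith
end

section
/- Let μ, κ, k, k̂ > 0 and q ≥ 1. Then there exist constants K1, K2 > 0 such that for all λ1, λ2 > 0: (μ/k)·exp((k/2)·(log(λ1/λ2))²) + (κ/(2k̂))·exp(k̂·(log(λ1λ2))²) ≥ K1·((λ1−1)² + (λ2−1)²)^{q/2} − K2. -/
theorem q_growth_coercivity (μ κ k khat q : ℝ)
    (hμ : 0 < μ) (hκ : 0 < κ) (hk : 0 < k) (hkhat : 0 < khat) (hq : 1 ≤ q) :
    ∃ K1 K2 : ℝ, 0 < K1 ∧ 0 < K2 ∧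
      ∀ l1 l2 : ℝ, 0 < l1 → 0 < l2 →
        (μ / k) * Real.exp ((k / 2) * (Real.log (l1 / l2)) ^ 2) +
            (κ / (2 * khat)) * Real.exp (khat * (Real.log (l1 * l2)) ^ 2) ≥
          K1 * ((l1 - 1) ^ 2 + (l2 - 1) ^ 2) ^ (q / 2) - K2 := by
  have hc : 0 < μ / k := by positivity
  have hd : 0 < κ / (2 * khat) := by positivity
  have ha : 0 < k / 2 := by positivity
  generalize μ / k = c at *
  generalize κ / (2 * khat) = d at *
  generalize k / 2 = a at *
  obtain ⟨m, hm, hmc, hmd⟩ : ∃ m : ℝ, 0 < m ∧ m ≤ c ∧ m ≤ d :=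
    ⟨min c d, lt_min hc hd, min_le_left _ _, min_le_right _ _⟩
  obtain ⟨s, hs, hsa, hsb⟩ : ∃ s : ℝ, 0 < s ∧ s ≤ a ∧ s ≤ khat :=
    ⟨min a khat, lt_min ha hkhat, min_le_left _ _, min_le_right _ _⟩
  refine ⟨m * Real.exp (-(q ^ 2 / (2 * s)) - 3 * (q / 2)), 1, by positivity, one_pos, ?_⟩
  intro l1 l2 h1 h2
  rw [Real.log_div h1.ne' h2.ne', Real.log_mul h1.ne' h2.ne']
  obtain ⟨x, rfl⟩ : ∃ x, l1 = Real.exp x := ⟨Real.log l1, (Real.exp_log h1).symm⟩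
  obtain ⟨y, rfl⟩ : ∃ y, l2 = Real.exp y := ⟨Real.log l2, (Real.exp_log h2).symm⟩
  simp only [Real.log_exp]
  have hL : m * Real.exp (s * (x ^ 2 + y ^ 2)) ≤
      c * Real.exp (a * (x - y) ^ 2) + d * Real.exp (khat * (x + y) ^ 2) := by
    rcases le_total ((x - y) ^ 2) ((x + y) ^ 2) with h | h
    · have e : s * (x ^ 2 + y ^ 2) ≤ khat * (x + y) ^ 2 :=
        mul_le_mul hsb (by nlinarith) (by positivity) hkhat.le
      have := mul_le_mul hmd (Real.exp_le_exp.2 e) (by positivity) hd.le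
      have : 0 < c * Real.exp (a * (x - y) ^ 2) := by positivity
      linarith
    · have e : s * (x ^ 2 + y ^ 2) ≤ a * (x - y) ^ 2 :=
        mul_le_mul hsa (by nlinarith) (by positivity) ha.le
      have := mul_le_mul hmc (Real.exp_le_exp.2 e) (by positivity) hc.le
      have : 0 < d * Real.exp (khat * (x + y) ^ 2) := by positivity
      linarith
  have hB : (Real.exp x - 1) ^ 2 + (Real.exp y - 1) ^ 2 ≤
      Real.exp (3 + 2 * (|x| + |y|)) := by
    have e3 : (4 : ℝ) ≤ Real.exp 3 := by linarith [Real.add_one_le_exp (3 : ℝ)]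
    have hE : (1 : ℝ) ≤ Real.exp (|x| + |y|) := Real.one_le_exp (by positivity)
    have hx : Real.exp x ≤ Real.exp (|x| + |y|) :=
      Real.exp_le_exp.2 (by linarith [le_abs_self x, abs_nonneg y])
    have hy : Real.exp y ≤ Real.exp (|x| + |y|) :=
      Real.exp_le_exp.2 (by linarith [le_abs_self y, abs_nonneg x])
    have e2 : Real.exp (2 * (|x| + |y|)) = Real.exp (|x| + |y|) ^ 2 := by
      rw [two_mul, Real.exp_add, sq]
    rw [Real.exp_add, e2]
    have := mul_le_mul_of_nonneg_right e3 (sq_nonneg (Real.exp (|x| + |y|)))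
    nlinarith
  have hP : ((Real.exp x - 1) ^ 2 + (Real.exp y - 1) ^ 2) ^ (q / 2) ≤
      Real.exp ((3 + 2 * (|x| + |y|)) * (q / 2)) := by
    rw [Real.exp_mul]
    exact Real.rpow_le_rpow (by positivity) hB (by positivity)
  have key : ∀ t : ℝ, q * |t| ≤ s * t ^ 2 + q ^ 2 / (4 * s) := by
    intro t
    have : s * t ^ 2 + q ^ 2 / (4 * s) - q * |t| = (2 * s * |t| - q) ^ 2 / (4 * s) := by
      rw [← sq_abs t]; field_simp; ring
    have : 0 ≤ (2 * s * |t| - q) ^ 2 / (4 * s) := by positivity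
    linarith
  have hq2 : q ^ 2 / (2 * s) = q ^ 2 / (4 * s) + q ^ 2 / (4 * s) := by field_simp; norm_num
  have hF : m * Real.exp (-(q ^ 2 / (2 * s)) - 3 * (q / 2)) *
      ((Real.exp x - 1) ^ 2 + (Real.exp y - 1) ^ 2) ^ (q / 2) ≤
      m * Real.exp (s * (x ^ 2 + y ^ 2)) := by
    rw [mul_assoc]
    refine mul_le_mul_of_nonneg_left ?_ hm.le
    refine (mul_le_mul_of_nonneg_left hP (Real.exp_pos _).le).trans ?_
    rw [← Real.exp_add]
    refine Real.exp_le_exp.2 ?_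
    rw [hq2]
    linarith [key x, key y]
  linarith
end

section
/- Let k be a real number. The inequality k − 1/(log a)² + 4a²/(a²−1)² ≥ 0 holds for all real a > 1 if and only if k ≥ 1/3. -/
lemma nonneg_of_deriv (f f' : ℝ → ℝ) (h : ∀ x, HasDerivAt f (f' x) x) (h0 : f 0 = 0)
    (hf : ∀ x, 0 ≤ x → 0 ≤ f' x) : ∀ x, 0 ≤ x → 0 ≤ f x := by
  intro x hx
  have hm : MonotoneOn f (Set.Ici 0) := by
    apply monotoneOn_of_deriv_nonneg (convex_Ici 0)
    · exact fun y _ => (h y).continuousAt.continuousWithinAt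
    · exact fun y _ => (h y).differentiableAt.differentiableWithinAt
    · intro y hy
      rw [interior_Ici] at hy
      rw [(h y).deriv]
      exact hf y (le_of_lt hy)
  have := hm (Set.mem_Ici.2 le_rfl) (Set.mem_Ici.2 hx) hx
  linarith

lemma hasDerivAt_S (x : ℝ) : HasDerivAt (fun x : ℝ => Real.sinh (2 * x)) (2 * Real.cosh (2 * x)) x := by
  have := (((hasDerivAt_id x).const_mul 2).sinh)
  simp only [id, mul_one] at this
  convert this using 1; ring

lemma hasDerivAt_C (x : ℝ) : HasDerivAt (fun x : ℝ => Real.cosh (2 * x)) (2 * Real.sinh (2 * x)) x := by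
  have := (((hasDerivAt_id x).const_mul 2).cosh)
  simp only [id, mul_one] at this
  convert this using 1; ring

lemma aux0 : ∀ x : ℝ, 0 ≤ x → 0 ≤ 2 * x * Real.cosh (2 * x) - Real.sinh (2 * x) := by
  refine nonneg_of_deriv _ (fun x => 4 * x * Real.sinh (2 * x)) (fun x => ?_) (by simp) ?_
  · refine HasDerivAt.congr_deriv ((((hasDerivAt_id' x).const_mul 2).mul (hasDerivAt_C x)).sub (hasDerivAt_S x)) ?_
    ring
  · intro x hx
    have : 0 ≤ Real.sinh (2 * x) := Real.sinh_nonneg_iff.2 (by linarith)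
    positivity

lemma aux1 : ∀ x : ℝ, 0 ≤ x →
    0 ≤ 10 - 10 * Real.cosh (2 * x) + 8 * x * Real.sinh (2 * x) + 4 * x ^ 2 * Real.cosh (2 * x) := by
  refine nonneg_of_deriv _ (fun x => 12 * (2 * x * Real.cosh (2 * x) - Real.sinh (2 * x))
    + 8 * x ^ 2 * Real.sinh (2 * x)) (fun x => ?_) (by simp) ?_
  · refine HasDerivAt.congr_deriv (((((hasDerivAt_C x).const_mul 10).const_sub 10).add
      (((hasDerivAt_id' x).const_mul 8).mul (hasDerivAt_S x))).add
      (((hasDerivAt_pow 2 x).const_mul 4).mul (hasDerivAt_C x))) ?_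
    push_cast
    ring
  · intro x hx
    have : 0 ≤ Real.sinh (2 * x) := Real.sinh_nonneg_iff.2 (by linarith)
    have := aux0 x hx
    positivity

lemma aux2 : ∀ x : ℝ, 0 ≤ x →
    0 ≤ 10 * x - 6 * Real.sinh (2 * x) + 2 * x * Real.cosh (2 * x) + 2 * x ^ 2 * Real.sinh (2 * x) := by
  refine nonneg_of_deriv _ _ (fun x => ?_) (by simp) aux1
  refine HasDerivAt.congr_deriv (((((hasDerivAt_id' x).const_mul 10).sub ((hasDerivAt_S x).const_mul 6)).add
      (((hasDerivAt_id' x).const_mul 2).mul (hasDerivAt_C x))).add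
      (((hasDerivAt_pow 2 x).const_mul 2).mul (hasDerivAt_S x))) ?_
  push_cast
  ring

lemma aux3 : ∀ x : ℝ, 0 ≤ x →
    0 ≤ 5 * x ^ 2 + 3 - 3 * Real.cosh (2 * x) + x ^ 2 * Real.cosh (2 * x) := by
  refine nonneg_of_deriv _ _ (fun x => ?_) (by simp) aux2
  refine HasDerivAt.congr_deriv (((((hasDerivAt_pow 2 x).const_mul 5).add_const 3).sub ((hasDerivAt_C x).const_mul 3)).add
      ((hasDerivAt_pow 2 x).mul (hasDerivAt_C x))) ?_
  push_cast
  ring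

lemma aux4 (x : ℝ) (hx : 0 ≤ x) : (3 - x ^ 2) * Real.sinh x ^ 2 ≤ 3 * x ^ 2 := by
  have h := aux3 x hx
  rw [Real.cosh_two_mul, Real.cosh_sq] at h
  linarith

lemma aux5 : ∀ x : ℝ, 0 ≤ x → 0 ≤ Real.cosh x - 1 - x ^ 2 / 2 := by
  refine nonneg_of_deriv _ (fun x => Real.sinh x - x) (fun x => ?_) (by simp) ?_
  · refine HasDerivAt.congr_deriv (((Real.hasDerivAt_cosh x).sub_const 1).sub ((hasDerivAt_pow 2 x).div_const 2)) ?_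
    push_cast
    ring
  · intro x hx
    have := Real.self_le_sinh_iff.2 hx
    linarith

lemma aux6 : ∀ x : ℝ, 0 ≤ x → 0 ≤ Real.sinh x - x - x ^ 3 / 6 := by
  refine nonneg_of_deriv _ _ (fun x => ?_) (by simp) aux5
  refine HasDerivAt.congr_deriv (((Real.hasDerivAt_sinh x).sub (hasDerivAt_id' x)).sub
    ((hasDerivAt_pow 3 x).div_const 6)) ?_
  push_cast
  ring

lemma aux7 (x : ℝ) (hx : 0 < x) :
    4 * Real.exp x ^ 2 / (Real.exp x ^ 2 - 1) ^ 2 = 1 / Real.sinh x ^ 2 := by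
  have h1 : 1 < Real.exp x := Real.one_lt_exp_iff.2 hx
  have h2 : Real.exp x ^ 2 - 1 ≠ 0 := by nlinarith
  have h3 : Real.sinh x = (Real.exp x ^ 2 - 1) / (2 * Real.exp x) := by
    rw [Real.sinh_eq, Real.exp_neg]
    field_simp
  rw [h3]
  field_simp
  try norm_num

theorem scalar_hessian_inequality_iff (k : ℝ) :
    (∀ a : ℝ, 1 < a →
      k - 1 / (Real.log a) ^ 2 + 4 * a ^ 2 / (a ^ 2 - 1) ^ 2 ≥ 0) ↔ k ≥ 1 / 3 := by
  constructor
  · intro h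
    have key : ∀ t : ℝ, 0 < t → 1 / 3 ≤ k * (1 + t) ^ 2 := by
      intro t ht
      obtain ⟨x, hx, hxt⟩ : ∃ x : ℝ, 0 < x ∧ x ^ 2 = 6 * t :=
        ⟨Real.sqrt (6 * t), Real.sqrt_pos.2 (by linarith), Real.sq_sqrt (by linarith)⟩
      have h1 := h (Real.exp x) (Real.one_lt_exp_iff.2 hx)
      rw [aux7 x hx, Real.log_exp] at h1
      have h2 : x * (1 + t) ≤ Real.sinh x := by
        have h3 := aux6 x hx.le
        have h4 : x ^ 3 = x * (6 * t) := by rw [← hxt]; ring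
        rw [h4] at h3
        linarith
      have h3 : 1 / Real.sinh x ^ 2 ≤ 1 / (x * (1 + t)) ^ 2 := by gcongr
      have h4 : 0 ≤ k - 1 / x ^ 2 + 1 / (x * (1 + t)) ^ 2 := by linarith
      have h5 : k - 1 / x ^ 2 + 1 / (x * (1 + t)) ^ 2 =
          (k * (1 + t) ^ 2 - (2 + t) / 6) / (1 + t) ^ 2 := by
        rw [mul_pow, hxt]
        field_simp
        ring
      rw [h5] at h4
      have h6 : 0 < (1 + t) ^ 2 := by positivity
      have h7 := (le_div_iff₀ h6).1 h4
      linarith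
    by_contra hk
    push Not at hk
    have hk0 : 0 < k := by
      have := key 1 one_pos
      linarith
    have := key ((1 / 3 - k) / 2) (by linarith)
    nlinarith [mul_pos hk0 (sub_pos.2 hk), mul_pos (mul_pos hk0 (sub_pos.2 hk)) (sub_pos.2 hk)]
  · intro hk a ha
    obtain ⟨x, rfl⟩ : ∃ x, a = Real.exp x := ⟨Real.log a, (Real.exp_log (by linarith)).symm⟩
    have hx : 0 < x := Real.one_lt_exp_iff.1 ha
    rw [aux7 x hx, Real.log_exp]
    have hs : 0 < Real.sinh x := Real.sinh_pos_iff.2 hx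
    have h := aux4 x hx.le
    have h1 : 1 / 3 - 1 / x ^ 2 + 1 / Real.sinh x ^ 2 =
        (3 * x ^ 2 - (3 - x ^ 2) * Real.sinh x ^ 2) / (3 * x ^ 2 * Real.sinh x ^ 2) := by
      field_simp
      ring
    have h2 : 0 ≤ (3 * x ^ 2 - (3 - x ^ 2) * Real.sinh x ^ 2) / (3 * x ^ 2 * Real.sinh x ^ 2) :=
      div_nonneg (by linarith) (by positivity)
    linarith
end

section
/- Let k be a real number. The inequality −(i1² + R²)·log((i1+R)/(i1−R)) + 2·i1·R·(1 + k·(log((i1+R)/(i1−R)))²) ≥ 0 holds for all real numbers R, i1 with 0 < R < i1 if and only if k ≥ 1/3. -/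
lemma aux_mono (f f' : ℝ → ℝ) (hf : ∀ x, HasDerivAt f (f' x) x)
    (h0 : f 0 = 0) (h : ∀ x, 0 < x → 0 ≤ f' x) (t : ℝ) (ht : 0 ≤ t) : 0 ≤ f t := by
  have hm : MonotoneOn f (Set.Ici 0) := by
    apply monotoneOn_of_deriv_nonneg (convex_Ici 0)
    · exact fun x _ => (hf x).continuousAt.continuousWithinAt
    · exact fun x _ => (hf x).differentiableAt.differentiableWithinAt
    · intro x hx
      rw [interior_Ici] at hx
      rw [(hf x).deriv]
      exact h x hx
  rw [← h0]
  exact hm Set.self_mem_Ici ht ht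

lemma aux_g (t : ℝ) (ht : 0 ≤ t) : 0 ≤ t * Real.cosh t - Real.sinh t - t ^ 3 / 3 := by
  apply aux_mono (fun t => t * Real.cosh t - Real.sinh t - t ^ 3 / 3)
    (fun t => t * (Real.sinh t - t)) _ (by simp) _ t ht
  · intro x
    have h := (((hasDerivAt_id x).mul (Real.hasDerivAt_cosh x)).sub
      (Real.hasDerivAt_sinh x)).sub ((hasDerivAt_pow 3 x).div_const 3)
    refine h.congr_deriv ?_
    simp
    ring
  · intro x hx
    have : x ≤ Real.sinh x := Real.self_le_sinh_iff.2 hx.le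
    exact mul_nonneg hx.le (by linarith)

lemma aux_f (t : ℝ) (ht : 0 ≤ t) :
    0 ≤ Real.sinh t * (1 + t ^ 2 / 3) - t * Real.cosh t := by
  apply aux_mono (fun t => Real.sinh t * (1 + t ^ 2 / 3) - t * Real.cosh t)
    (fun t => t / 3 * (t * Real.cosh t - Real.sinh t)) _ (by simp) _ t ht
  · intro x
    have h := ((Real.hasDerivAt_sinh x).mul
      (((hasDerivAt_pow 2 x).div_const 3).const_add 1)).sub
      ((hasDerivAt_id x).mul (Real.hasDerivAt_cosh x))
    refine h.congr_deriv ?_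
    simp
    ring
  · intro x hx
    have := aux_g x hx.le
    have h3 : 0 < x ^ 3 := by positivity
    exact mul_nonneg (by positivity) (by linarith)

theorem hessian_determinant_inequality_iff (k : ℝ) :
    (∀ R i1 : ℝ, 0 < R → R < i1 →
      -(i1 ^ 2 + R ^ 2) * Real.log ((i1 + R) / (i1 - R)) +
        2 * i1 * R * (1 + k * (Real.log ((i1 + R) / (i1 - R))) ^ 2) ≥ 0) ↔
      k ≥ 1 / 3 := by
  have key : ∀ R i1 : ℝ, 0 < R → R < i1 → ∀ t, t = Real.log ((i1 + R) / (i1 - R)) →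
      -(i1 ^ 2 + R ^ 2) * t + 2 * i1 * R * (1 + k * t ^ 2) =
        (i1 ^ 2 - R ^ 2) * (Real.sinh t * (1 + k * t ^ 2) - t * Real.cosh t) := by
    intro R i1 hR h t ht
    have h1 : 0 < i1 - R := by linarith
    have h2 : 0 < i1 + R := by linarith
    have hs : (i1 ^ 2 - R ^ 2) * Real.sinh t = 2 * i1 * R := by
      rw [ht, Real.sinh_log (by positivity)]
      field_simp
      ring
    have hc : (i1 ^ 2 - R ^ 2) * Real.cosh t = i1 ^ 2 + R ^ 2 := by
      rw [ht, Real.cosh_log (by positivity)]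
      field_simp
      ring
    rw [← hs, ← hc]
    ring
  constructor
  · intro H
    have hb : ∀ t : ℝ, 0 < t → 1 / 3 ≤ |k| * Real.cosh t ∧ t / 3 ≤ k * Real.sinh t := by
      intro t ht
      have hE : 1 < Real.exp t := Real.one_lt_exp_iff.2 ht
      have hlog : t = Real.log (((Real.exp t + 1) + (Real.exp t - 1)) /
          ((Real.exp t + 1) - (Real.exp t - 1))) := by
        rw [show ((Real.exp t + 1) + (Real.exp t - 1)) /
          ((Real.exp t + 1) - (Real.exp t - 1)) = Real.exp t by ring, Real.log_exp]
      have h := H (Real.exp t - 1) (Real.exp t + 1) (by linarith) (by linarith)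
      rw [← hlog, key _ _ (by linarith) (by linarith) t hlog] at h
      have h' : 0 ≤ Real.sinh t * (1 + k * t ^ 2) - t * Real.cosh t :=
        nonneg_of_mul_nonneg_right h (by nlinarith)
      have hg := aux_g t ht.le
      have h2 : t / 3 ≤ k * Real.sinh t := by
        have : 0 ≤ t ^ 2 * (k * Real.sinh t - t / 3) := by nlinarith
        have := nonneg_of_mul_nonneg_right this (by positivity)
        linarith
      refine ⟨?_, h2⟩
      have hs : Real.sinh t ≤ t * Real.cosh t := by
        have : 0 < t ^ 3 := by positivity
        linarith
      have hsp : 0 < Real.sinh t := Real.sinh_pos_iff.2 ht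
      have h3 : k * Real.sinh t ≤ |k| * (t * Real.cosh t) :=
        (mul_le_mul_of_nonneg_right (le_abs_self k) hsp.le).trans
          (mul_le_mul_of_nonneg_left hs (abs_nonneg k))
      have : 0 ≤ t * (|k| * Real.cosh t - 1 / 3) := by linarith
      have := nonneg_of_mul_nonneg_right this ht
      linarith
    have hk : 0 < k := by
      have := (hb 1 one_pos).2
      have hsp : 0 < Real.sinh 1 := Real.sinh_pos_iff.2 one_pos
      by_contra hn
      push Not at hn
      nlinarith
    have hlim : Filter.Tendsto (fun t => |k| * Real.cosh t) (nhdsWithin 0 (Set.Ioi 0))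
        (nhds (|k| * Real.cosh 0)) :=
      ((continuous_const.mul Real.continuous_cosh).tendsto 0).mono_left nhdsWithin_le_nhds
    have := ge_of_tendsto hlim (Filter.eventually_of_mem self_mem_nhdsWithin
      (fun t ht => (hb t ht).1))
    rw [Real.cosh_zero, mul_one, abs_of_pos hk] at this
    exact this
  · intro hk R i1 hR h
    rw [key R i1 hR h _ rfl]
    have h1 : 0 < i1 - R := by linarith
    have ht : 0 ≤ Real.log ((i1 + R) / (i1 - R)) :=
      Real.log_nonneg ((one_le_div h1).2 (by linarith))
    generalize Real.log ((i1 + R) / (i1 - R)) = t at ht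
    have hf := aux_f t ht
    have hs : 0 ≤ Real.sinh t := Real.sinh_nonneg_iff.2 ht
    have : 0 ≤ (k - 1 / 3) * (Real.sinh t * t ^ 2) :=
      mul_nonneg (by linarith) (by positivity)
    exact mul_nonneg (by nlinarith) (by linarith)
end
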